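/- Let 0 < p < 1 and 0 < q < 1, let π₀ = q/(p+q) and π₁ = p/(p+q), and let pₙ be the pmf on {0,1}ⁿ of the stationary two-state Markov chain with pₙ(xⁿ) = π_{x₁}·∏_{i=2}^n P(x_i|x_{i−1}), where P(x_i ≠ x_{i−1} | x_{i−1}=0) = p and P(x_i ≠ x_{i−1} | x_{i−1}=1) = q. Let the distortion be the per-letter Hamming distortion d(xⁿ,x̂ⁿ) = (1/n)·Σ_{i=1}^n 1{x_i ≠ x̂_i}, with reconstruction alphabet {0,1}. Then for every D with 0 ≤ D < 1/2 and D ≤ min{p, 1−p, q, 1−q}, the n-th order rate distortion function with feed-forward equals Rₙ(D) = (1/n)·H_b(π₁) + ((n−1)/n)·( π₀·H_b(p) + π₁·H_b(q) ) − H_b(D), where H_b(t) = −t log₂ t − (1−t) log₂(1−t) is the binary entropy function. -/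

import Mathlib

open scoped BigOperators
open Filter

noncomputable section

namespace FFRD

variable {X Y : Type} [Fintype X] [DecidableEq X] [Fintype Y] [DecidableEq Y] {n : ℕ}

/-- `p` is a probability mass function on a finite type. -/
def IsPMF {α : Type} [Fintype α] (p : α → ℝ) : Prop :=
  (∀ a, 0 ≤ p a) ∧ ∑ a, p a = 1

/-- `r` is a conditional pmf on `Fin n → Y` given `Fin n → X`. -/
def IsCondPMF (r : (Fin n → X) → (Fin n → Y) → ℝ) : Prop :=
  (∀ x y, 0 ≤ r x y) ∧ ∀ x, ∑ y, r x y = 1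

/-- The causal conditioning pmf `q_r(ŷⁿ‖x^{n-1})` induced by the joint pmf `p(x)·r(y|x)`:
the product over `i` of the conditional probabilities `P(y_i | y^{i-1}, x^{i-1})`. -/
def causalCond (p : (Fin n → X) → ℝ) (r : (Fin n → X) → (Fin n → Y) → ℝ)
    (x : Fin n → X) (y : Fin n → Y) : ℝ :=
  ∏ i : Fin n,
    ((∑ x' : Fin n → X, ∑ y' : Fin n → Y,
        if (∀ j, j < i → x' j = x j) ∧ (∀ j, j ≤ i → y' j = y j)
        then p x' * r x' y' else 0) /
      (∑ x' : Fin n → X, ∑ y' : Fin n → Y,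
        if (∀ j, j < i → x' j = x j) ∧ (∀ j, j < i → y' j = y j)
        then p x' * r x' y' else 0))

/-- Directed information `I(X̂ⁿ → Xⁿ)` computed from source pmf `p` and conditional pmf `r`. -/
def directedInfo (p : (Fin n → X) → ℝ) (r : (Fin n → X) → (Fin n → Y) → ℝ) : ℝ :=
  ∑ x, ∑ y, p x * r x y * Real.logb 2 (r x y / causalCond p r x y)

/-- The `n`-th order rate distortion function with feed-forward. -/
def Rn (n : ℕ) (p : (Fin n → X) → ℝ) (d : (Fin n → X) → (Fin n → Y) → ℝ) (D : ℝ) : ℝ :=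
  (1 / (n : ℝ)) *
    sInf {v | ∃ r : (Fin n → X) → (Fin n → Y) → ℝ, IsCondPMF r ∧
      (∑ x, ∑ y, p x * r x y * d x y) ≤ D ∧ v = directedInfo p r}

/-- Left shift on sequences. -/
def shift (X : Type) : (ℕ → X) → (ℕ → X) := fun ω k => ω (k + 1)

/-- The law of the first `n` coordinates under `μ`. -/
def lawFin [MeasurableSpace X] (μ : MeasureTheory.Measure (ℕ → X)) (n : ℕ)
    (x : Fin n → X) : ℝ :=
  (μ {ω | ∀ i : Fin n, ω (i : ℕ) = x i}).toReal

/-- Per-letter distortion extended to blocks of length `L`. -/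
def dBlock (d0 : X → Y → ℝ) (L : ℕ) (x : Fin L → X) (y : Fin L → Y) : ℝ :=
  (1 / (L : ℝ)) * ∑ i, d0 (x i) (y i)

end FFRD

namespace FFRD

/-- Binary entropy function (base 2). -/
def Hb (t : ℝ) : ℝ := -(t * Real.logb 2 t) - (1 - t) * Real.logb 2 (1 - t)

/-- The pmf on `{0,1}ⁿ` (`Bool`-valued blocks) of the stationary two-state Markov chain with
flip probability `p` from state `0` (`false`) and `q` from state `1` (`true`); the initial
distribution is the stationary one `π₀ = q/(p+q)`, `π₁ = p/(p+q)`. -/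
def markovPMF (p q : ℝ) {n : ℕ} (x : Fin n → Bool) : ℝ :=
  ∏ i : Fin n,
    if (i : ℕ) = 0 then (if x i then p / (p + q) else q / (p + q))
    else
      (if x ⟨(i : ℕ) - 1, Nat.lt_of_le_of_lt (Nat.sub_le _ _) i.isLt⟩ then
        (if x i then 1 - q else q)
       else (if x i then p else 1 - p))

/-- Per-letter Hamming distortion on blocks of length `n`. -/
def hamming (n : ℕ) (x y : Fin n → Bool) : ℝ :=
  (1 / (n : ℝ)) * ∑ i, if x i = y i then (0 : ℝ) else 1

end FFRD

/-!
For a backward channel `b` from reconstruction letters to source letters, the products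
`causalCond · ∏ b (x_i) (y_i)` have total mass at most one, and the directed information equals
`entropy p + 𝔼 ∑ log₂ b (x_i) (y_i)` plus the divergence of the joint law from these products.
Taking for `b` the binary symmetric channel with crossover probability `D`, Gibbs' inequality gives
`H(Xⁿ) - n H_b(D)` as a lower bound for every reconstruction of distortion at most `D`.

The bound is attained when the joint law factors through `b`. This is possible whenever each
conditional law of the source is Bernoulli with parameter in `[D, 1 - D]`, for it is then the output
of the channel on a Bernoulli input, and drawing `y_i` from that input law given the past of the
source is causal. It remains to compute the entropy of the source from the chain rule and
stationarity.
-/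

namespace FFRD

open Function Real Set

section CausalKernel

variable {Z : Type*} {n : ℕ}

lemma dependsOn_cons_Iic {β : Type*} {i : Fin n} {f : (Fin (n + 1) → Z) → β}
    (hf : DependsOn f (Iic i.succ)) (a : Z) :
    DependsOn (fun z : Fin n → Z ↦ f (Fin.cons a z)) (Iic i) := by
  intro z z' hz
  refine hf fun j hj ↦ ?_
  cases j using Fin.cases with
  | zero => rfl
  | succ j => exact hz j (Fin.succ_le_succ_iff.1 hj)

lemma apply_cons_eq_of_dependsOn_Iic_zero {β : Type*} {f : (Fin (n + 1) → Z) → β}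
    (hf : DependsOn f (Iic 0)) (a : Z) (z z' : Fin n → Z) :
    f (Fin.cons a z) = f (Fin.cons a z') := by
  refine hf fun j hj ↦ ?_
  obtain rfl : j = 0 := le_bot_iff.1 hj
  rfl

lemma apply_update_eq_of_dependsOn_Iio {β : Type*} {i : Fin n} {f : (Fin n → Z) → β}
    (hf : DependsOn f (Iio i)) (z : Fin n → Z) (a : Z) : f (update z i a) = f z :=
  hf fun _ hj ↦ update_of_ne (ne_of_lt hj) a z

variable [Fintype Z]

lemma sum_eq_sum_cons (F : (Fin (n + 1) → Z) → ℝ) :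
    ∑ z, F z = ∑ a, ∑ z : Fin n → Z, F (Fin.cons a z) := by
  rw [← (Fin.consEquiv fun _ ↦ Z).sum_comp, Fintype.sum_prod_type]
  rfl

/-- The tail `fun _ ↦ a` is a placeholder that `F` does not read. -/
lemma sum_cons_eq_sum_update_zero {F : (Fin (n + 1) → Z) → ℝ} (hF : DependsOn F (Iic 0))
    (z : Fin (n + 1) → Z) : ∑ a, F (Fin.cons a fun _ ↦ a) = ∑ a, F (update z 0 a) := by
  refine Finset.sum_congr rfl fun a _ ↦ ?_
  rw [← Fin.cons_self_tail z, Fin.update_cons_zero, apply_cons_eq_of_dependsOn_Iic_zero hF]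

/-- A family of one-step transition probabilities on `Zⁿ`: `K i z` stands for the conditional
probability of the letter `z i` given the earlier letters, so that `∏ i, K i z` is the mass of `z`.
Each `K i` is a function of the whole sequence that only looks at the letters up to time `i`.
No sign is imposed, since summation identities do not need one. -/
structure IsCausalKernel (K : Fin n → (Fin n → Z) → ℝ) : Prop where
  dependsOn : ∀ i, DependsOn (K i) (Iic i)
  sum_update : ∀ i z, ∑ a, K i (update z i a) = 1

lemma sum_prod_cons {K : Fin (n + 1) → (Fin (n + 1) → Z) → ℝ} (hK : DependsOn (K 0) (Iic 0))
    (G : (Fin (n + 1) → Z) → ℝ) :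
    ∑ z, G z * ∏ i, K i z = ∑ a, K 0 (Fin.cons a fun _ ↦ a) *
      ∑ z : Fin n → Z, G (Fin.cons a z) * ∏ i : Fin n, K i.succ (Fin.cons a z) := by
  rw [sum_eq_sum_cons]
  refine Finset.sum_congr rfl fun a _ ↦ ?_
  rw [Finset.mul_sum]
  refine Finset.sum_congr rfl fun z _ ↦ ?_
  rw [Fin.prod_univ_succ, apply_cons_eq_of_dependsOn_Iic_zero hK a z fun _ ↦ a]
  ring

lemma sum_prod_le_one {K : Fin n → (Fin n → Z) → ℝ} (hdep : ∀ i, DependsOn (K i) (Iic i))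
    (hnonneg : ∀ i z, 0 ≤ K i z) (hsum : ∀ i z, ∑ a, K i (update z i a) ≤ 1) :
    ∑ z, ∏ i, K i z ≤ 1 := by
  induction n with
  | zero => simp
  | succ n ih =>
    have tail_le_one (a : Z) : ∑ z : Fin n → Z, ∏ i : Fin n, K i.succ (Fin.cons a z) ≤ 1 :=
      ih (fun i ↦ dependsOn_cons_Iic (hdep i.succ) a) (fun i z ↦ hnonneg i.succ _)
        fun i z ↦ by simpa only [Fin.cons_update] using hsum i.succ (Fin.cons a z)
    have head_le_one : ∑ a, K 0 (Fin.cons a fun _ ↦ a) ≤ 1 := by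
      rcases isEmpty_or_nonempty Z with _ | ⟨⟨b⟩⟩
      · simp
      · exact (sum_cons_eq_sum_update_zero (hdep 0) fun _ ↦ b).trans_le (hsum 0 _)
    calc ∑ z, ∏ i, K i z
      _ = ∑ a, K 0 (Fin.cons a fun _ ↦ a) *
            ∑ z : Fin n → Z, ∏ i : Fin n, K i.succ (Fin.cons a z) := by
          simpa only [one_mul] using sum_prod_cons (hdep 0) fun _ ↦ 1
      _ ≤ ∑ a, K 0 (Fin.cons a fun _ ↦ a) :=
          Finset.sum_le_sum fun a _ ↦ mul_le_of_le_one_right (hnonneg 0 _) (tail_le_one a)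
      _ ≤ 1 := head_le_one

namespace IsCausalKernel

lemma cons {K : Fin (n + 1) → (Fin (n + 1) → Z) → ℝ} (hK : IsCausalKernel K) (a : Z) :
    IsCausalKernel fun (i : Fin n) (z : Fin n → Z) ↦ K i.succ (Fin.cons a z) where
  dependsOn i := dependsOn_cons_Iic (hK.dependsOn i.succ) a
  sum_update i z := by simpa only [Fin.cons_update] using hK.sum_update i.succ (Fin.cons a z)

variable [Nonempty Z]

lemma sum_prod_eq_one {K : Fin n → (Fin n → Z) → ℝ} (hK : IsCausalKernel K) :
    ∑ z, ∏ i, K i z = 1 := by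
  induction n with
  | zero => simp
  | succ n ih =>
    obtain ⟨z⟩ : Nonempty (Fin (n + 1) → Z) := inferInstance
    have h := sum_prod_cons (hK.dependsOn 0) fun _ ↦ 1
    simp only [one_mul, ih (hK.cons _), mul_one] at h
    rw [h, sum_cons_eq_sum_update_zero (hK.dependsOn 0) z, hK.sum_update]

/-- The tower property: the inner sum is the conditional expectation of `G` given the letters before
time `i`. -/
lemma sum_mul_prod_eq {K : Fin n → (Fin n → Z) → ℝ} (hK : IsCausalKernel K) (i : Fin n)
    {G : (Fin n → Z) → ℝ} (hG : DependsOn G (Iic i)) :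
    ∑ z, G z * ∏ j, K j z =
      ∑ z, (∑ a, G (update z i a) * K i (update z i a)) * ∏ j, K j z := by
  induction n with
  | zero => exact i.elim0
  | succ n ih =>
    cases i using Fin.cases with
    | zero =>
      have hGK : DependsOn (fun z ↦ G z * K 0 z) (Iic 0) := fun z z' hz ↦ by
        simp only [hG hz, hK.dependsOn 0 hz]
      have G_cons (a : Z) (z : Fin n → Z) : G (Fin.cons a z) = G (Fin.cons a fun _ ↦ a) :=
        apply_cons_eq_of_dependsOn_Iic_zero hG a _ _
      calc ∑ z, G z * ∏ j, K j z
        _ = ∑ a, G (Fin.cons a fun _ ↦ a) * K 0 (Fin.cons a fun _ ↦ a) := by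
            simp only [sum_prod_cons (hK.dependsOn 0), G_cons, ← Finset.mul_sum,
              (hK.cons _).sum_prod_eq_one, mul_one, mul_comm (K 0 _)]
        _ = ∑ z, (∑ a, G (Fin.cons a fun _ ↦ a) * K 0 (Fin.cons a fun _ ↦ a)) * ∏ j, K j z := by
            rw [← Finset.mul_sum, hK.sum_prod_eq_one, mul_one]
        _ = ∑ z, (∑ a, G (update z 0 a) * K 0 (update z 0 a)) * ∏ j, K j z :=
            Finset.sum_congr rfl fun z _ ↦ by rw [sum_cons_eq_sum_update_zero hGK z]
    | succ i =>
      rw [sum_prod_cons (hK.dependsOn 0), sum_prod_cons (hK.dependsOn 0)]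
      refine Finset.sum_congr rfl fun a _ ↦ ?_
      simp only [ih (hK.cons a) i (dependsOn_cons_Iic hG a), Fin.cons_update]

lemma sum_prod_mul_logb_prod {K : Fin n → (Fin n → Z) → ℝ} (hK : IsCausalKernel K) (b : ℝ) :
    ∑ z, (∏ j, K j z) * logb b (∏ j, K j z) =
      ∑ i, ∑ z, (∑ a, K i (update z i a) * logb b (K i (update z i a))) * ∏ j, K j z := by
  have logb_prod_eq (z : Fin n → Z) :
      (∏ j, K j z) * logb b (∏ j, K j z) = ∑ i, logb b (K i z) * ∏ j, K j z := by
    rw [← Finset.sum_mul, mul_comm]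
    by_cases h : ∏ j, K j z = 0
    · simp only [h, mul_zero]
    · rw [logb_prod _ _ fun i hi ↦ Finset.prod_ne_zero_iff.1 h i hi]
  simp only [logb_prod_eq]
  rw [Finset.sum_comm]
  refine Finset.sum_congr rfl fun i _ ↦ ?_
  rw [hK.sum_mul_prod_eq i fun z z' hz ↦ congrArg (logb b) (hK.dependsOn i hz)]
  simp only [mul_comm (K i _)]

end IsCausalKernel

end CausalKernel

section Entropy

variable {α : Type*} [Fintype α]

/-- Shannon entropy in bits of a mass function on a finite type; letters of mass zero contribute
nothing because `0 * log 0 = 0`. -/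
def entropy (p : α → ℝ) : ℝ := -∑ a, p a * logb 2 (p a)

lemma sum_mul_logb_div_nonneg {P Q : α → ℝ} (hP : ∀ a, 0 ≤ P a) (hQ : ∀ a, 0 ≤ Q a)
    (hPQ : ∀ a, P a ≠ 0 → Q a ≠ 0) (hsum : ∑ a, Q a ≤ ∑ a, P a) :
    0 ≤ ∑ a, P a * logb 2 (P a / Q a) := by
  have sub_le (a : α) : P a - Q a ≤ P a * log (P a / Q a) := by
    by_cases ha : P a = 0
    · simpa only [ha, zero_sub, zero_mul, neg_nonpos] using hQ a
    · have hPa : 0 < P a := (hP a).lt_of_ne' ha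
      have hQa : 0 < Q a := (hQ a).lt_of_ne' (hPQ a ha)
      calc P a - Q a = P a * (1 - (P a / Q a)⁻¹) := by field_simp
        _ ≤ P a * log (P a / Q a) :=
          mul_le_mul_of_nonneg_left (one_sub_inv_le_log_of_pos (div_pos hPa hQa)) hPa.le
  have sum_nonneg : 0 ≤ ∑ a, P a * log (P a / Q a) :=
    calc 0 ≤ ∑ a, (P a - Q a) := by rw [Finset.sum_sub_distrib]; exact sub_nonneg.2 hsum
      _ ≤ ∑ a, P a * log (P a / Q a) := Finset.sum_le_sum fun a _ ↦ sub_le a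
  simp only [logb, ← mul_div_assoc, ← Finset.sum_div]
  exact div_nonneg sum_nonneg (log_nonneg one_le_two)

end Entropy

section Causal

variable {X Y : Type} [Fintype Y] {n : ℕ}

lemma exists_isCondPMF_mul_eq [Nonempty Y] {p : (Fin n → X) → ℝ}
    {J : (Fin n → X) → (Fin n → Y) → ℝ} (hJ : ∀ x y, 0 ≤ J x y) (hp : ∀ x, ∑ y, J x y = p x) :
    ∃ r : (Fin n → X) → (Fin n → Y) → ℝ, IsCondPMF r ∧ ∀ x y, p x * r x y = J x y := by
  suffices h : ∀ x, ∃ r : (Fin n → Y) → ℝ,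
      (∀ y, 0 ≤ r y) ∧ ∑ y, r y = 1 ∧ ∀ y, p x * r y = J x y by
    choose r hr0 hr1 hr using h
    exact ⟨r, ⟨hr0, hr1⟩, hr⟩
  intro x
  by_cases hx : p x = 0
  · have J_eq_zero (y : Fin n → Y) : J x y = 0 :=
      (Finset.sum_eq_zero_iff_of_nonneg fun y _ ↦ hJ x y).1 ((hp x).trans hx) y (Finset.mem_univ y)
    classical
    obtain ⟨y₀⟩ : Nonempty (Fin n → Y) := inferInstance
    refine ⟨fun y ↦ if y = y₀ then 1 else 0, fun y ↦ ite_nonneg zero_le_one le_rfl, ?_, ?_⟩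
    · simp only [Finset.sum_ite_eq', Finset.mem_univ, if_true]
    · simp only [hx, zero_mul, J_eq_zero, implies_true]
  · refine ⟨fun y ↦ J x y / p x, fun y ↦ div_nonneg (hJ x y) ?_, ?_, fun y ↦ mul_div_cancel₀ _ hx⟩
    · exact hp x ▸ Finset.sum_nonneg fun y _ ↦ hJ x y
    · rw [← Finset.sum_div, hp, div_self hx]

variable [Fintype X]

lemma sum_sum_eq_sum_pair (F : (Fin n → X) → (Fin n → Y) → ℝ) :
    ∑ x, ∑ y, F x y = ∑ z : Fin n → X × Y, F (fun j ↦ (z j).1) fun j ↦ (z j).2 := by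
  rw [← Fintype.sum_prod_type' (f := F),
    ← (Equiv.arrowProdEquivProdArrow (Fin n) (fun _ ↦ X) fun _ ↦ Y).sum_comp]
  rfl

variable [DecidableEq X] [DecidableEq Y]

/-- The probability, under the joint mass function `J`, that the source agrees with `x` at the times
in `S` and the reconstruction agrees with `y` at the times in `T`. The conditional probabilities in
`causalCond` are quotients of such masses. -/
def cylinderMass (J : (Fin n → X) → (Fin n → Y) → ℝ) (S T : Finset (Fin n))
    (x : Fin n → X) (y : Fin n → Y) : ℝ :=
  ∑ x', ∑ y', if (∀ j ∈ S, x' j = x j) ∧ ∀ j ∈ T, y' j = y j then J x' y' else 0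

lemma cylinderMass_congr (J : (Fin n → X) → (Fin n → Y) → ℝ) {S T : Finset (Fin n)}
    {x x' : Fin n → X} {y y' : Fin n → Y} (hx : ∀ j ∈ S, x j = x' j) (hy : ∀ j ∈ T, y j = y' j) :
    cylinderMass J S T x y = cylinderMass J S T x' y' := by
  have agree_iff (u : Fin n → X) (v : Fin n → Y) :
      ((∀ j ∈ S, u j = x j) ∧ ∀ j ∈ T, v j = y j) ↔
        (∀ j ∈ S, u j = x' j) ∧ ∀ j ∈ T, v j = y' j :=
    and_congr (forall₂_congr fun j hj ↦ by rw [hx j hj]) (forall₂_congr fun j hj ↦ by rw [hy j hj])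
  simp only [cylinderMass, agree_iff]

lemma sum_cylinderMass_update (J : (Fin n → X) → (Fin n → Y) → ℝ) (S : Finset (Fin n)) (i : Fin n)
    (x : Fin n → X) (y : Fin n → Y) :
    ∑ c, cylinderMass J S (Finset.Iic i) x (update y i c) =
      cylinderMass J S (Finset.Iio i) x y := by
  have agree_iff (v : Fin n → Y) (c : Y) :
      (∀ j ∈ Finset.Iic i, v j = update y i c j) ↔ v i = c ∧ ∀ j ∈ Finset.Iio i, v j = y j := by
    rw [← Finset.Iio_insert, Finset.forall_mem_insert, update_self]
    refine and_congr_right fun _ ↦ forall₂_congr fun j hj ↦ ?_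
    rw [update_of_ne (Finset.mem_Iio.1 hj).ne]
  simp only [cylinderMass, agree_iff]
  rw [Finset.sum_comm]
  refine Finset.sum_congr rfl fun x' _ ↦ ?_
  rw [Finset.sum_comm]
  refine Finset.sum_congr rfl fun y' _ ↦ ?_
  simp only [and_left_comm (b := y' i = _), ite_and, Finset.sum_ite_eq, Finset.mem_univ, if_true]

lemma cylinderMass_nonneg {J : (Fin n → X) → (Fin n → Y) → ℝ} (hJ : ∀ x y, 0 ≤ J x y)
    (S T : Finset (Fin n)) (x : Fin n → X) (y : Fin n → Y) : 0 ≤ cylinderMass J S T x y :=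
  Finset.sum_nonneg fun x' _ ↦ Finset.sum_nonneg fun y' _ ↦ ite_nonneg (hJ x' y') le_rfl

lemma cylinderMass_pos {J : (Fin n → X) → (Fin n → Y) → ℝ} (hJ : ∀ x y, 0 ≤ J x y)
    (S T : Finset (Fin n)) {x : Fin n → X} {y : Fin n → Y} (hxy : 0 < J x y) :
    0 < cylinderMass J S T x y := by
  refine Finset.sum_pos' (fun x' _ ↦ Finset.sum_nonneg fun y' _ ↦ ite_nonneg (hJ x' y') le_rfl)
    ⟨x, Finset.mem_univ x, ?_⟩
  refine Finset.sum_pos' (fun y' _ ↦ ite_nonneg (hJ x y') le_rfl) ⟨y, Finset.mem_univ y, ?_⟩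
  simpa using hxy

/-- The conditional probability `P(y_i | y^{i-1}, x^{i-1})` under the joint mass function `J`, with
value `0` when the conditioning event has mass zero. -/
def causalStep (J : (Fin n → X) → (Fin n → Y) → ℝ) (i : Fin n) (x : Fin n → X) (y : Fin n → Y) :
    ℝ :=
  cylinderMass J (Finset.Iio i) (Finset.Iic i) x y /
    cylinderMass J (Finset.Iio i) (Finset.Iio i) x y

lemma causalStep_congr (J : (Fin n → X) → (Fin n → Y) → ℝ) {i : Fin n} {x x' : Fin n → X}
    {y y' : Fin n → Y} (hx : ∀ j < i, x j = x' j) (hy : ∀ j ≤ i, y j = y' j) :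
    causalStep J i x y = causalStep J i x' y' := by
  have hx' : ∀ j ∈ Finset.Iio i, x j = x' j := by simpa only [Finset.mem_Iio] using hx
  have hy' : ∀ j ∈ Finset.Iic i, y j = y' j := by simpa only [Finset.mem_Iic] using hy
  rw [causalStep, causalStep, cylinderMass_congr J hx' hy',
    cylinderMass_congr J hx' fun j hj ↦ hy' j (Finset.Iio_subset_Iic_self hj)]

/-- The sum is `0` instead of `1` when the conditioning event has mass zero. -/
lemma sum_causalStep_update_le_one (J : (Fin n → X) → (Fin n → Y) → ℝ) (i : Fin n)
    (x : Fin n → X) (y : Fin n → Y) : ∑ c, causalStep J i x (update y i c) ≤ 1 := by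
  have past_update (c : Y) : cylinderMass J (Finset.Iio i) (Finset.Iio i) x (update y i c) =
      cylinderMass J (Finset.Iio i) (Finset.Iio i) x y :=
    cylinderMass_congr J (fun _ _ ↦ rfl) fun j hj ↦ update_of_ne (Finset.mem_Iio.1 hj).ne c y
  simp only [causalStep, past_update, ← Finset.sum_div, sum_cylinderMass_update]
  exact div_self_le_one _

lemma causalStep_nonneg {J : (Fin n → X) → (Fin n → Y) → ℝ} (hJ : ∀ x y, 0 ≤ J x y) (i : Fin n)
    (x : Fin n → X) (y : Fin n → Y) : 0 ≤ causalStep J i x y :=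
  div_nonneg (cylinderMass_nonneg hJ _ _ x y) (cylinderMass_nonneg hJ _ _ x y)

lemma causalStep_pos {J : (Fin n → X) → (Fin n → Y) → ℝ} (hJ : ∀ x y, 0 ≤ J x y) (i : Fin n)
    {x : Fin n → X} {y : Fin n → Y} (hxy : 0 < J x y) : 0 < causalStep J i x y :=
  div_pos (cylinderMass_pos hJ _ _ hxy) (cylinderMass_pos hJ _ _ hxy)

lemma causalCond_eq_prod_causalStep (p : (Fin n → X) → ℝ) (r : (Fin n → X) → (Fin n → Y) → ℝ)
    (x : Fin n → X) (y : Fin n → Y) :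
    causalCond p r x y = ∏ i, causalStep (fun x y ↦ p x * r x y) i x y := by
  simp only [causalCond, causalStep, cylinderMass, Finset.mem_Iio, Finset.mem_Iic]

lemma sum_prod_causalStep_mul_le_one {J : (Fin n → X) → (Fin n → Y) → ℝ} {b : X → Y → ℝ}
    (hJ : ∀ x y, 0 ≤ J x y) (hb : ∀ a c, 0 ≤ b a c) (hb_sum : ∀ c, ∑ a, b a c ≤ 1) :
    ∑ x, ∑ y, ∏ i, causalStep J i x y * b (x i) (y i) ≤ 1 := by
  rw [sum_sum_eq_sum_pair]
  refine sum_prod_le_one (fun i z z' hz ↦ ?_)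
    (fun i z ↦ mul_nonneg (causalStep_nonneg hJ i _ _) (hb _ _)) fun i z ↦ ?_
  · simp only [hz i (mem_Iic.2 le_rfl)]
    rw [causalStep_congr J (fun j hj ↦ congrArg Prod.fst (hz j hj.le))
      fun j hj ↦ congrArg Prod.snd (hz j hj)]
  · set x : Fin n → X := fun j ↦ (z j).1
    set y : Fin n → Y := fun j ↦ (z j).2
    have step_update (a : X × Y) : causalStep J i (fun j ↦ (update z i a j).1)
        (fun j ↦ (update z i a j).2) = causalStep J i x (update y i a.2) :=
      causalStep_congr J (fun j hj ↦ by rw [update_of_ne hj.ne])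
        fun j _ ↦ apply_update (fun _ ↦ Prod.snd) z i a j
    simp only [step_update, update_self]
    rw [Fintype.sum_prod_type_right]
    calc ∑ c, ∑ a, causalStep J i x (update y i c) * b a c
      _ ≤ ∑ c, causalStep J i x (update y i c) := Finset.sum_le_sum fun c _ ↦ by
          rw [← Finset.mul_sum]
          exact mul_le_of_le_one_right (causalStep_nonneg hJ i _ _) (hb_sum c)
      _ ≤ 1 := sum_causalStep_update_le_one J i x y

variable {p : (Fin n → X) → ℝ} {r : (Fin n → X) → (Fin n → Y) → ℝ} {b : X → Y → ℝ}

lemma causalCond_nonneg (hpr : ∀ x y, 0 ≤ p x * r x y) (x : Fin n → X) (y : Fin n → Y) :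
    0 ≤ causalCond p r x y := by
  rw [causalCond_eq_prod_causalStep]
  exact Finset.prod_nonneg fun i _ ↦ causalStep_nonneg hpr i x y

lemma causalCond_pos (hpr : ∀ x y, 0 ≤ p x * r x y) {x : Fin n → X} {y : Fin n → Y}
    (hxy : 0 < p x * r x y) : 0 < causalCond p r x y := by
  rw [causalCond_eq_prod_causalStep]
  exact Finset.prod_pos fun i _ ↦ causalStep_pos hpr i hxy

/-- Here `b` plays the role of a backward test channel, from reconstruction to source letters: the
directed information is a divergence from the law that `b` and the causal conditioning pmf induce,
plus two terms that only see the source entropy and the letterwise log-likelihood. -/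
lemma directedInfo_eq_divergence_add (hpr : ∀ x y, 0 ≤ p x * r x y) (hr : ∀ x, ∑ y, r x y = 1)
    (hb : ∀ x y, p x * r x y ≠ 0 → ∀ i, b (x i) (y i) ≠ 0) :
    directedInfo p r =
      ∑ x, ∑ y, p x * r x y *
        logb 2 (p x * r x y / (causalCond p r x y * ∏ i, b (x i) (y i))) +
      ∑ x, ∑ y, p x * r x y * ∑ i, logb 2 (b (x i) (y i)) + entropy p := by
  have entropy_eq : entropy p = ∑ x, ∑ y, p x * r x y * -logb 2 (p x) := by
    simp only [entropy, ← Finset.sum_mul, ← Finset.mul_sum, hr, mul_one, mul_neg,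
      Finset.sum_neg_distrib]
  simp only [directedInfo, entropy_eq, ← Finset.sum_add_distrib, ← mul_add]
  refine Finset.sum_congr rfl fun x _ ↦ Finset.sum_congr rfl fun y _ ↦ ?_
  by_cases hxy : p x * r x y = 0
  · simp only [hxy, zero_mul]
  · have hc := (causalCond_pos hpr ((hpr x y).lt_of_ne' hxy)).ne'
    have hB : ∏ i, b (x i) (y i) ≠ 0 := Finset.prod_ne_zero_iff.2 fun i _ ↦ hb x y hxy i
    have hp := left_ne_zero_of_mul hxy
    have hr := right_ne_zero_of_mul hxy
    rw [← logb_prod _ _ fun i _ ↦ hb x y hxy i, logb_div hxy (mul_ne_zero hc hB), logb_mul hp hr,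
      logb_mul hc hB, logb_div hr hc]
    ring

lemma entropy_add_sum_logb_le_directedInfo (hp : ∀ x, 0 ≤ p x) (hp_sum : ∑ x, p x = 1)
    (hr : IsCondPMF r) (hb_nonneg : ∀ a c, 0 ≤ b a c) (hb_sum : ∀ c, ∑ a, b a c ≤ 1)
    (hb : ∀ x y, p x * r x y ≠ 0 → ∀ i, b (x i) (y i) ≠ 0) :
    entropy p + ∑ x, ∑ y, p x * r x y * ∑ i, logb 2 (b (x i) (y i)) ≤ directedInfo p r := by
  have hpr (x : Fin n → X) (y : Fin n → Y) : 0 ≤ p x * r x y := mul_nonneg (hp x) (hr.1 x y)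
  have divergence_nonneg : 0 ≤ ∑ x, ∑ y, p x * r x y *
      logb 2 (p x * r x y / (causalCond p r x y * ∏ i, b (x i) (y i))) := by
    rw [← Fintype.sum_prod_type']
    refine sum_mul_logb_div_nonneg (fun w ↦ hpr w.1 w.2) (fun w ↦ ?_) (fun w hw ↦ ?_) ?_
    · exact mul_nonneg (causalCond_nonneg hpr _ _) (Finset.prod_nonneg fun i _ ↦ hb_nonneg _ _)
    · exact mul_ne_zero (causalCond_pos hpr ((hpr w.1 w.2).lt_of_ne' hw)).ne'
        (Finset.prod_ne_zero_iff.2 fun i _ ↦ hb w.1 w.2 hw i)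
    · simp only [Fintype.sum_prod_type, ← Finset.mul_sum, hr.2, mul_one, hp_sum,
        causalCond_eq_prod_causalStep, ← Finset.prod_mul_distrib]
      exact sum_prod_causalStep_mul_le_one hpr hb_nonneg hb_sum
  rw [directedInfo_eq_divergence_add hpr hr.2 hb]
  linarith

end Causal
section CausalCoupling

variable {X Y : Type} {n : ℕ}

/-- The joint law of a source and its reconstruction when `y_i` is drawn from `s i x` and `x_i` is
then drawn from the backward channel `b (·) (y_i)`. -/
def causalJoint (s : Fin n → (Fin n → X) → Y → ℝ) (b : X → Y → ℝ) (x : Fin n → X) (y : Fin n → Y) :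
    ℝ :=
  ∏ i, s i x (y i) * b (x i) (y i)

lemma sum_causalJoint [Fintype Y] (s : Fin n → (Fin n → X) → Y → ℝ) (b : X → Y → ℝ)
    (x : Fin n → X) : ∑ y, causalJoint s b x y = ∏ i, ∑ c, s i x c * b (x i) c := by
  rw [Fintype.prod_sum]
  rfl

variable [Fintype X] [Fintype Y]

/-- The normalization making `causalJoint s b` a law in which the reconstruction letter `y_i` is
chosen from the past of the source alone. As in `IsCausalKernel`, no sign is imposed. -/
structure IsCausalCoupling (s : Fin n → (Fin n → X) → Y → ℝ) (b : X → Y → ℝ) : Prop where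
  dependsOn : ∀ i, DependsOn (s i) (Iio i)
  sum_strategy : ∀ i x, ∑ c, s i x c = 1
  sum_channel : ∀ c, ∑ a, b a c = 1

namespace IsCausalCoupling

variable {s : Fin n → (Fin n → X) → Y → ℝ} {b : X → Y → ℝ}

lemma strategy_update (h : IsCausalCoupling s b) (i : Fin n) (z : Fin n → X × Y) (a : X × Y) :
    s i (fun j ↦ (update z i a j).1) = s i fun j ↦ (z j).1 :=
  h.dependsOn i fun j hj ↦ by rw [update_of_ne (ne_of_lt hj)]

lemma isCausalKernel (h : IsCausalCoupling s b) :
    IsCausalKernel fun (i : Fin n) (z : Fin n → X × Y) ↦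
      s i (fun j ↦ (z j).1) (z i).2 * b (z i).1 (z i).2 where
  dependsOn i z z' hz := by
    have past_eq : s i (fun j ↦ (z j).1) = s i fun j ↦ (z' j).1 :=
      h.dependsOn i fun j hj ↦ congrArg Prod.fst (hz j (mem_Iic.2 (le_of_lt hj)))
    simp only [past_eq, hz i (mem_Iic.2 le_rfl)]
  sum_update i z := by
    simp only [h.strategy_update, update_self, Fintype.sum_prod_type_right,
      ← Finset.mul_sum, h.sum_channel, mul_one, h.sum_strategy]

variable [Nonempty X] [Nonempty Y]

lemma sum_causalJoint_mul_letter (h : IsCausalCoupling s b) {g : X → Y → ℝ} {δ : ℝ}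
    (hg : ∀ c, ∑ a, g a c * b a c = δ) (i : Fin n) :
    ∑ x, ∑ y, causalJoint s b x y * g (x i) (y i) = δ := by
  have step_mean (z : Fin n → X × Y) :
      ∑ a : X × Y, g a.1 a.2 * (s i (fun j ↦ (z j).1) a.2 * b a.1 a.2) = δ := by
    simp only [mul_left_comm (g _ _), Fintype.sum_prod_type_right, ← Finset.mul_sum, hg,
      ← Finset.sum_mul, h.sum_strategy, one_mul]
  calc ∑ x, ∑ y, causalJoint s b x y * g (x i) (y i)
    _ = ∑ z : Fin n → X × Y, g (z i).1 (z i).2 *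
          ∏ j, s j (fun k ↦ (z k).1) (z j).2 * b (z j).1 (z j).2 := by
        rw [sum_sum_eq_sum_pair]
        simp only [causalJoint, mul_comm (g _ _)]
    _ = δ := by
        rw [h.isCausalKernel.sum_mul_prod_eq i (G := fun z ↦ g (z i).1 (z i).2) fun z z' hz ↦ by
          simp only [hz i (mem_Iic.2 le_rfl)]]
        simp only [h.strategy_update, update_self, step_mean, ← Finset.mul_sum,
          h.isCausalKernel.sum_prod_eq_one, mul_one]

variable [DecidableEq X] [DecidableEq Y]

lemma cylinderMass_causalJoint (h : IsCausalCoupling s b) (i : Fin n) (x : Fin n → X)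
    (y : Fin n → Y) :
    cylinderMass (causalJoint s b) (Finset.Iio i) (Finset.Iic i) x y =
      cylinderMass (causalJoint s b) (Finset.Iio i) (Finset.Iio i) x y * s i x (y i) := by
  let past (z : Fin n → X × Y) : Prop :=
    (∀ j ∈ Finset.Iio i, (z j).1 = x j) ∧ ∀ j ∈ Finset.Iio i, (z j).2 = y j
  have past_congr {z z' : Fin n → X × Y} (hz : ∀ j < i, z j = z' j) : past z ↔ past z' := by
    simp +contextual only [past, Finset.mem_Iio, hz]
  have past_update (z : Fin n → X × Y) (a : X × Y) : past (update z i a) ↔ past z :=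
    past_congr fun j hj ↦ update_of_ne hj.ne a z
  have agree_iff (z : Fin n → X × Y) : ((∀ j ∈ Finset.Iio i, (z j).1 = x j) ∧
      ∀ j ∈ Finset.Iic i, (z j).2 = y j) ↔ past z ∧ (z i).2 = y i := by
    rw [← Finset.Iio_insert, Finset.forall_mem_insert, and_left_comm, and_comm]
  have step_mass (z : Fin n → X × Y) :
      ∑ a : X × Y, (if past z ∧ a.2 = y i then 1 else 0) *
        (s i (fun j ↦ (z j).1) a.2 * b a.1 a.2) = if past z then s i x (y i) else 0 := by
    by_cases hz : past z
    · rw [h.dependsOn i fun j hj ↦ hz.1 j (Finset.mem_Iio.2 hj)]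
      simp only [hz, true_and, if_true, ite_mul, one_mul, zero_mul, Fintype.sum_prod_type,
        Finset.sum_ite_eq', Finset.mem_univ, ← Finset.mul_sum, h.sum_channel, mul_one]
    · simp only [hz, false_and, if_false, zero_mul, Finset.sum_const_zero]
  simp only [cylinderMass]
  rw [sum_sum_eq_sum_pair, sum_sum_eq_sum_pair, Finset.sum_mul]
  simp only [agree_iff]
  have tower := h.isCausalKernel.sum_mul_prod_eq i
    (G := fun z ↦ if past z ∧ (z i).2 = y i then 1 else 0) fun z z' hz ↦ by
      simp only [past_congr fun j hj ↦ hz j (mem_Iic.2 hj.le), hz i (mem_Iic.2 le_rfl)]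
  simp only [h.strategy_update, past_update, update_self, step_mass] at tower
  calc _ = _ := by simpa only [ite_mul, one_mul, zero_mul, causalJoint] using tower
    _ = _ := Finset.sum_congr rfl fun z _ ↦ by
      simp only [causalJoint, past, ite_mul, zero_mul, mul_comm (s i x (y i))]

lemma causalCond_eq_prod (h : IsCausalCoupling s b) {p : (Fin n → X) → ℝ}
    {r : (Fin n → X) → (Fin n → Y) → ℝ} (hpr : ∀ x y, p x * r x y = causalJoint s b x y)
    (hJ : ∀ x y, 0 ≤ causalJoint s b x y) {x : Fin n → X} {y : Fin n → Y}
    (hxy : causalJoint s b x y ≠ 0) : causalCond p r x y = ∏ i, s i x (y i) := by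
  rw [causalCond_eq_prod_causalStep]
  refine Finset.prod_congr rfl fun i _ ↦ ?_
  simp only [causalStep, hpr, h.cylinderMass_causalJoint i]
  exact mul_div_cancel_left₀ _ (cylinderMass_pos hJ _ _ ((hJ x y).lt_of_ne' hxy)).ne'

lemma directedInfo_eq (h : IsCausalCoupling s b) {p : (Fin n → X) → ℝ}
    {r : (Fin n → X) → (Fin n → Y) → ℝ} (hr : ∀ x, ∑ y, r x y = 1)
    (hpr : ∀ x y, p x * r x y = causalJoint s b x y) (hJ : ∀ x y, 0 ≤ causalJoint s b x y) :
    directedInfo p r = entropy p + ∑ x, ∑ y, p x * r x y * ∑ i, logb 2 (b (x i) (y i)) := by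
  have divergence_term_eq_zero (x : Fin n → X) (y : Fin n → Y) : p x * r x y *
      logb 2 (p x * r x y / (causalCond p r x y * ∏ i, b (x i) (y i))) = 0 := by
    by_cases hxy : causalJoint s b x y = 0
    · rw [hpr, hxy, zero_mul]
    · rw [h.causalCond_eq_prod hpr hJ hxy, ← Finset.prod_mul_distrib, hpr, ← causalJoint,
        div_self hxy, logb_one, mul_zero]
  rw [directedInfo_eq_divergence_add (b := b) (fun x y ↦ hpr x y ▸ hJ x y) hr fun x y hxy i ↦ ?_]
  · simp only [divergence_term_eq_zero, Finset.sum_const_zero, zero_add, add_comm]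
  · rw [hpr] at hxy
    exact right_ne_zero_of_mul (Finset.prod_ne_zero_iff.1 hxy i (Finset.mem_univ i))

end IsCausalCoupling

end CausalCoupling

section Binary

variable {n : ℕ} {D : ℝ}

/-- The mass function on `Bool` giving mass `t` to `true`. -/
def bernoulliMass (t : ℝ) (c : Bool) : ℝ := if c then t else 1 - t

/-- The binary symmetric channel with crossover probability `D`: the probability of the source
letter `a` given the reconstruction letter `c`. -/
def bscMass (D : ℝ) (a c : Bool) : ℝ := if a = c then 1 - D else D

lemma sum_bernoulliMass (t : ℝ) : ∑ c, bernoulliMass t c = 1 := by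
  simp [bernoulliMass]

lemma bernoulliMass_nonneg {t : ℝ} (ht : t ∈ Icc 0 1) (c : Bool) : 0 ≤ bernoulliMass t c :=
  ite_nonneg ht.1 (sub_nonneg.2 ht.2)

lemma entropy_bernoulliMass (t : ℝ) : entropy (bernoulliMass t) = Hb t := by
  simp only [entropy, bernoulliMass, Hb, Fintype.sum_bool, Bool.false_eq_true, if_true, if_false]
  ring

lemma sum_bscMass (D : ℝ) (c : Bool) : ∑ a, bscMass D a c = 1 := by
  cases c <;> simp [bscMass]

lemma bscMass_nonneg (hD : D ∈ Icc 0 1) (a c : Bool) : 0 ≤ bscMass D a c :=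
  ite_nonneg (sub_nonneg.2 hD.2) hD.1

/-- The input parameter solves `u * (1 - D) + (1 - u) * D = t` for `u`. -/
lemma sum_bernoulliMass_mul_bscMass (hD : D < 1 / 2) (t : ℝ) (a : Bool) :
    ∑ c, bernoulliMass ((t - D) / (1 - 2 * D)) c * bscMass D a c = bernoulliMass t a := by
  have input_mul : (t - D) / (1 - 2 * D) * (1 - 2 * D) = t - D :=
    div_mul_cancel₀ _ (by linarith)
  simp only [bernoulliMass, bscMass, Fintype.sum_bool, Bool.false_eq_true, if_true, if_false]
  cases a
  · simp only [Bool.false_eq_true, if_true, if_false]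
    linear_combination -input_mul
  · simp only [Bool.true_eq_false, if_true, if_false]
    linear_combination input_mul

lemma deconvolution_mem_Icc {t : ℝ} (hD : D < 1 / 2) (ht : t ∈ Icc D (1 - D)) :
    (t - D) / (1 - 2 * D) ∈ Icc 0 1 := by
  have hpos : 0 < 1 - 2 * D := by linarith
  exact ⟨div_nonneg (sub_nonneg.2 ht.1) hpos.le, (div_le_one hpos).2 (by linarith [ht.2])⟩

lemma natCast_mul_hamming (x y : Fin n → Bool) :
    n * hamming n x y = ∑ i, if x i = y i then (0 : ℝ) else 1 := by
  rcases eq_or_ne n 0 with rfl | hn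
  · simp
  · rw [hamming, one_div, mul_inv_cancel_left₀ (Nat.cast_ne_zero.2 hn)]

lemma hamming_nonneg (x y : Fin n → Bool) : 0 ≤ hamming n x y :=
  mul_nonneg (by positivity) (Finset.sum_nonneg fun _ _ ↦ ite_nonneg le_rfl zero_le_one)

lemma eq_of_hamming_eq_zero {x y : Fin n → Bool} (h : hamming n x y = 0) : x = y := by
  have hsum := natCast_mul_hamming x y
  rw [h, mul_zero, eq_comm,
    Finset.sum_eq_zero_iff_of_nonneg fun _ _ ↦ ite_nonneg le_rfl zero_le_one] at hsum
  ext i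
  simpa using hsum i (Finset.mem_univ i)

lemma sum_logb_bscMass (D : ℝ) (x y : Fin n → Bool) :
    ∑ i, logb 2 (bscMass D (x i) (y i)) =
      n * logb 2 (1 - D) + n * (logb 2 D - logb 2 (1 - D)) * hamming n x y := by
  have letter (i : Fin n) : logb 2 (bscMass D (x i) (y i)) =
      logb 2 (1 - D) + (logb 2 D - logb 2 (1 - D)) * if x i = y i then 0 else 1 := by
    unfold bscMass
    split_ifs <;> ring
  simp only [letter, Finset.sum_add_distrib, ← Finset.mul_sum, ← natCast_mul_hamming,
    Finset.sum_const, Finset.card_univ, Fintype.card_fin, nsmul_eq_mul]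
  ring

lemma sum_mul_sum_logb_bscMass {P : (Fin n → Bool) → (Fin n → Bool) → ℝ}
    (hP : ∑ x, ∑ y, P x y = 1) (D : ℝ) :
    ∑ x, ∑ y, P x y * ∑ i, logb 2 (bscMass D (x i) (y i)) = -(n * Hb D) +
      n * (logb 2 (1 - D) - logb 2 D) * (D - ∑ x, ∑ y, P x y * hamming n x y) := by
  simp only [sum_logb_bscMass, mul_add, Finset.sum_add_distrib, ← Finset.sum_mul, hP,
    mul_left_comm (P _ _), ← Finset.mul_sum, Hb]
  ring

lemma bscMass_ne_zero_of_distortion_le {P : (Fin n → Bool) → (Fin n → Bool) → ℝ}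
    (hP : ∀ x y, 0 ≤ P x y) (hD : D ∈ Ico 0 (1 / 2))
    (hPD : ∑ x, ∑ y, P x y * hamming n x y ≤ D) {x y : Fin n → Bool} (hxy : P x y ≠ 0)
    (i : Fin n) : bscMass D (x i) (y i) ≠ 0 := by
  have one_sub_ne : 1 - D ≠ 0 := by linarith [hD.2]
  rcases hD.1.eq_or_lt with rfl | hD_pos
  · have term_nonneg (x y : Fin n → Bool) : 0 ≤ P x y * hamming n x y :=
      mul_nonneg (hP x y) (hamming_nonneg x y)
    have term_le : P x y * hamming n x y ≤ 0 :=
      calc P x y * hamming n x y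
        _ ≤ ∑ y, P x y * hamming n x y :=
            Finset.single_le_sum (fun y _ ↦ term_nonneg x y) (Finset.mem_univ y)
        _ ≤ ∑ x, ∑ y, P x y * hamming n x y := Finset.single_le_sum
            (f := fun x ↦ ∑ y, P x y * hamming n x y)
            (fun x _ ↦ Finset.sum_nonneg fun y _ ↦ term_nonneg x y) (Finset.mem_univ x)
        _ ≤ 0 := hPD
    have hamming_eq_zero : hamming n x y = 0 :=
      (mul_eq_zero.1 (term_le.antisymm (term_nonneg x y))).resolve_left hxy
    rw [bscMass, if_pos (congrFun (eq_of_hamming_eq_zero hamming_eq_zero) i)]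
    exact one_sub_ne
  · unfold bscMass
    split_ifs
    exacts [one_sub_ne, hD_pos.ne']

lemma entropy_sub_mul_Hb_le_directedInfo {p : (Fin n → Bool) → ℝ}
    {r : (Fin n → Bool) → (Fin n → Bool) → ℝ} (hp : IsPMF p) (hr : IsCondPMF r)
    (hD : D ∈ Ico 0 (1 / 2)) (hdist : ∑ x, ∑ y, p x * r x y * hamming n x y ≤ D) :
    entropy p - n * Hb D ≤ directedInfo p r := by
  have joint_nonneg (x y : Fin n → Bool) : 0 ≤ p x * r x y := mul_nonneg (hp.1 x) (hr.1 x y)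
  have joint_sum : ∑ x, ∑ y, p x * r x y = 1 := by
    simp only [← Finset.mul_sum, hr.2, mul_one, hp.2]
  have logb_le : logb 2 D ≤ logb 2 (1 - D) := by
    rcases hD.1.eq_or_lt with rfl | hD_pos
    · simp
    · exact logb_le_logb_of_le one_lt_two hD_pos (by linarith [hD.2])
  have slack_nonneg : 0 ≤ n * (logb 2 (1 - D) - logb 2 D) *
      (D - ∑ x, ∑ y, p x * r x y * hamming n x y) :=
    mul_nonneg (mul_nonneg n.cast_nonneg (sub_nonneg.2 logb_le)) (sub_nonneg.2 hdist)
  have lower_bound := entropy_add_sum_logb_le_directedInfo hp.1 hp.2 hr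
    (bscMass_nonneg ⟨hD.1, by linarith [hD.2]⟩) (fun c ↦ (sum_bscMass D c).le)
    fun x y hxy ↦ bscMass_ne_zero_of_distortion_le joint_nonneg hD hdist hxy
  rw [sum_mul_sum_logb_bscMass joint_sum] at lower_bound
  linarith

/-- The law of a binary source whose letter `x_i` equals `true` with conditional probability
`t i x`, meant to be a function of the past `x_0, …, x_{i-1}`. -/
def causalSource (t : Fin n → (Fin n → Bool) → ℝ) (x : Fin n → Bool) : ℝ :=
  ∏ i, bernoulliMass (t i x) (x i)

variable {t : Fin n → (Fin n → Bool) → ℝ}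

lemma isCausalKernel_bernoulliMass (ht : ∀ i, DependsOn (t i) (Iio i)) :
    IsCausalKernel fun i x ↦ bernoulliMass (t i x) (x i) where
  dependsOn i x x' hx := by
    simp only [ht i fun j hj ↦ hx j (mem_Iic.2 (le_of_lt hj)), hx i (mem_Iic.2 le_rfl)]
  sum_update i x := by
    simp only [apply_update_eq_of_dependsOn_Iio (ht i), update_self, sum_bernoulliMass]

lemma isPMF_causalSource (ht : ∀ i, DependsOn (t i) (Iio i)) (ht01 : ∀ i x, t i x ∈ Icc 0 1) :
    IsPMF (causalSource t) :=
  ⟨fun x ↦ Finset.prod_nonneg fun i _ ↦ bernoulliMass_nonneg (ht01 i x) (x i),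
    (isCausalKernel_bernoulliMass ht).sum_prod_eq_one⟩

lemma entropy_causalSource (ht : ∀ i, DependsOn (t i) (Iio i)) :
    entropy (causalSource t) = ∑ i, ∑ x, Hb (t i x) * causalSource t x := by
  simp only [entropy, causalSource, (isCausalKernel_bernoulliMass ht).sum_prod_mul_logb_prod,
    apply_update_eq_of_dependsOn_Iio (ht _), update_self, ← entropy_bernoulliMass, neg_mul,
    Finset.sum_neg_distrib]

lemma isCausalCoupling_bscMass (ht : ∀ i, DependsOn (t i) (Iio i)) (D : ℝ) :
    IsCausalCoupling (fun i x ↦ bernoulliMass ((t i x - D) / (1 - 2 * D))) (bscMass D) where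
  dependsOn i x x' hx := by simp only [ht i hx]
  sum_strategy i x := sum_bernoulliMass _
  sum_channel := sum_bscMass D

lemma IsCausalCoupling.sum_causalJoint_mul_hamming {s : Fin n → (Fin n → Bool) → Bool → ℝ}
    (h : IsCausalCoupling s (bscMass D)) (hn : n ≠ 0) :
    ∑ x, ∑ y, causalJoint s (bscMass D) x y * hamming n x y = D := by
  have flip_prob (c : Bool) : ∑ a, (if a = c then 0 else 1) * bscMass D a c = D := by
    cases c <;> simp [bscMass]
  have letter_mean := h.sum_causalJoint_mul_letter flip_prob
  have hn' : (n : ℝ) ≠ 0 := Nat.cast_ne_zero.2 hn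
  calc ∑ x, ∑ y, causalJoint s (bscMass D) x y * hamming n x y
    _ = (1 / n) * ∑ i, ∑ x, ∑ y,
          causalJoint s (bscMass D) x y * (if x i = y i then 0 else 1) := by
        simp only [hamming, mul_left_comm (causalJoint _ _ _ _) (1 / (n : ℝ)), ← Finset.mul_sum]
        simp only [Finset.mul_sum, Finset.sum_comm (s := Finset.univ (α := Fin n))]
    _ = D := by
        simp only [letter_mean, Finset.sum_const, Finset.card_univ, Fintype.card_fin, nsmul_eq_mul]
        field_simp

lemma exists_directedInfo_causalSource_eq (hn : n ≠ 0) (hD : D ∈ Ico 0 (1 / 2))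
    (ht : ∀ i, DependsOn (t i) (Iio i)) (htD : ∀ i x, t i x ∈ Icc D (1 - D)) :
    ∃ r, IsCondPMF r ∧ ∑ x, ∑ y, causalSource t x * r x y * hamming n x y = D ∧
      directedInfo (causalSource t) r = entropy (causalSource t) - n * Hb D := by
  set s : Fin n → (Fin n → Bool) → Bool → ℝ :=
    fun i x ↦ bernoulliMass ((t i x - D) / (1 - 2 * D))
  have hs : IsCausalCoupling s (bscMass D) := isCausalCoupling_bscMass ht D
  have joint_nonneg (x y : Fin n → Bool) : 0 ≤ causalJoint s (bscMass D) x y :=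
    Finset.prod_nonneg fun i _ ↦ mul_nonneg
      (bernoulliMass_nonneg (deconvolution_mem_Icc hD.2 (htD i x)) _)
      (bscMass_nonneg ⟨hD.1, by linarith [hD.2]⟩ _ _)
  have source_marginal (x : Fin n → Bool) :
      ∑ y, causalJoint s (bscMass D) x y = causalSource t x := by
    simp only [sum_causalJoint, s, sum_bernoulliMass_mul_bscMass hD.2, causalSource]
  obtain ⟨r, hr, joint_eq⟩ := exists_isCondPMF_mul_eq joint_nonneg source_marginal
  have distortion_eq : ∑ x, ∑ y, causalSource t x * r x y * hamming n x y = D := by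
    simp only [joint_eq, hs.sum_causalJoint_mul_hamming hn]
  have joint_sum : ∑ x, ∑ y, causalSource t x * r x y = 1 := by
    simp only [← Finset.mul_sum, hr.2, mul_one]
    exact (isCausalKernel_bernoulliMass ht).sum_prod_eq_one
  refine ⟨r, hr, distortion_eq, ?_⟩
  rw [hs.directedInfo_eq hr.2 joint_eq joint_nonneg, sum_mul_sum_logb_bscMass joint_sum,
    distortion_eq, sub_self, mul_zero, add_zero, sub_eq_add_neg]

theorem Rn_causalSource_hamming (hn : n ≠ 0) (hD : D ∈ Ico 0 (1 / 2))
    (ht : ∀ i, DependsOn (t i) (Iio i)) (htD : ∀ i x, t i x ∈ Icc D (1 - D)) :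
    Rn n (causalSource t) (hamming n) D = (1 / n) * entropy (causalSource t) - Hb D := by
  have source_pmf : IsPMF (causalSource t) := isPMF_causalSource ht fun i x ↦
    ⟨hD.1.trans (htD i x).1, (htD i x).2.trans (sub_le_self 1 hD.1)⟩
  have least : IsLeast {v | ∃ r, IsCondPMF r ∧
      ∑ x, ∑ y, causalSource t x * r x y * hamming n x y ≤ D ∧
        v = directedInfo (causalSource t) r} (entropy (causalSource t) - n * Hb D) := by
    constructor
    · obtain ⟨r, hr, hdist, hinfo⟩ := exists_directedInfo_causalSource_eq hn hD ht htD
      exact ⟨r, hr, hdist.le, hinfo.symm⟩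
    · rintro _ ⟨r, hr, hdist, rfl⟩
      exact entropy_sub_mul_Hb_le_directedInfo source_pmf hr hD hdist
  have hn' : (n : ℝ) ≠ 0 := Nat.cast_ne_zero.2 hn
  rw [Rn, least.csInf_eq]
  field_simp

end Binary

section Markov

variable {n : ℕ} {p q : ℝ}

/-- The probability that the stationary chain of `markovPMF p q` is in state `true` at time `i`,
given its past. The guard on `i` keeps the truncated subtraction in the index harmless. -/
def markovProb (p q : ℝ) (i : Fin n) (x : Fin n → Bool) : ℝ :=
  if (i : ℕ) = 0 then p / (p + q)
  else if x ⟨(i : ℕ) - 1, Nat.lt_of_le_of_lt (Nat.sub_le _ _) i.isLt⟩ then 1 - q else p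

lemma markovProb_zero (p q : ℝ) (x : Fin (n + 1) → Bool) : markovProb p q 0 x = p / (p + q) := rfl

lemma markovProb_succ (p q : ℝ) (i : Fin n) (x : Fin (n + 1) → Bool) :
    markovProb p q i.succ x = if x i.castSucc then 1 - q else p := rfl

lemma dependsOn_markovProb (p q : ℝ) (i : Fin n) : DependsOn (markovProb p q i) (Iio i) := by
  intro x x' hx
  by_cases hi : (i : ℕ) = 0
  · simp only [markovProb, hi, if_true]
  · have prev_lt : (⟨i - 1, Nat.lt_of_le_of_lt (Nat.sub_le _ _) i.isLt⟩ : Fin n) < i :=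
      Nat.sub_one_lt hi
    simp only [markovProb, hx _ prev_lt]

lemma markovPMF_eq_causalSource (hpq : p + q ≠ 0) :
    markovPMF p q = causalSource (n := n) (markovProb p q) := by
  have one_sub_stationary : 1 - p / (p + q) = q / (p + q) := by field_simp; ring
  funext x
  refine Finset.prod_congr rfl fun i _ ↦ ?_
  simp only [markovProb, bernoulliMass]
  split_ifs <;> simp [one_sub_stationary]

/-- The stationary probability of `true` is a convex combination of the two transition
probabilities into `true`. -/
lemma markovProb_mem {S : Set ℝ} (hS : Convex ℝ S) (hp0 : 0 ≤ p) (hq0 : 0 ≤ q) (hpq : p + q ≠ 0)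
    (hp : p ∈ S) (hq : 1 - q ∈ S) (i : Fin n) (x : Fin n → Bool) : markovProb p q i x ∈ S := by
  unfold markovProb
  split_ifs
  · have stationary_eq : (q / (p + q)) • p + (p / (p + q)) • (1 - q) = p / (p + q) := by
      simp only [smul_eq_mul]; field_simp; ring
    rw [← stationary_eq]
    exact hS hp hq (by positivity) (by positivity) (by field_simp; ring)
  · exact hq
  · exact hp

lemma sum_letter_mul_markov (hpq : p + q ≠ 0) (i : Fin (n + 1)) (h : Bool → ℝ) :
    ∑ x, h (x i) * causalSource (markovProb p q) x =
      q / (p + q) * h false + p / (p + q) * h true := by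
  have hK := isCausalKernel_bernoulliMass (dependsOn_markovProb (n := n + 1) p q)
  have tower (i : Fin (n + 1)) (h : Bool → ℝ) :
      ∑ x, h (x i) * causalSource (markovProb p q) x =
        ∑ x, (∑ a, h a * bernoulliMass (markovProb p q i x) a) *
          causalSource (markovProb p q) x := by
    simp only [causalSource]
    rw [hK.sum_mul_prod_eq i (G := fun x ↦ h (x i)) fun x x' hx ↦
      congrArg h (hx i (mem_Iic.2 le_rfl))]
    simp only [apply_update_eq_of_dependsOn_Iio (dependsOn_markovProb p q i), update_self]
  rw [tower]
  induction i using Fin.induction generalizing h with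
  | zero =>
    simp only [markovProb_zero, ← Finset.mul_sum, causalSource, hK.sum_prod_eq_one, mul_one]
    simp only [bernoulliMass, Fintype.sum_bool, Bool.false_eq_true, if_true, if_false]
    field_simp
    ring
  | succ i ih =>
    simp only [markovProb_succ]
    rw [tower i.castSucc fun c ↦ ∑ a, h a * bernoulliMass (if c then 1 - q else p) a, ih]
    simp only [bernoulliMass, Fintype.sum_bool, Bool.false_eq_true, if_true, if_false]
    field_simp
    ring

lemma Hb_one_sub (t : ℝ) : Hb (1 - t) = Hb t := by
  rw [Hb, Hb, sub_sub_cancel]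
  ring

lemma entropy_markov (hpq : p + q ≠ 0) :
    entropy (causalSource (n := n + 1) (markovProb p q)) =
      Hb (p / (p + q)) + n * (q / (p + q) * Hb p + p / (p + q) * Hb q) := by
  have initial_term : ∑ x, Hb (markovProb p q 0 x) * causalSource (n := n + 1) (markovProb p q) x =
      Hb (p / (p + q)) := by
    simp only [markovProb_zero, ← Finset.mul_sum, causalSource, mul_one,
      (isCausalKernel_bernoulliMass (dependsOn_markovProb p q)).sum_prod_eq_one]
  have transition_term (i : Fin n) :
      ∑ x, Hb (markovProb p q i.succ x) * causalSource (markovProb p q) x =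
        q / (p + q) * Hb p + p / (p + q) * Hb q := by
    simpa [markovProb_succ, Hb_one_sub] using
      sum_letter_mul_markov hpq i.castSucc fun c ↦ Hb (if c then 1 - q else p)
  rw [entropy_causalSource (dependsOn_markovProb p q), Fin.sum_univ_succ, initial_term]
  simp only [transition_term, Finset.sum_const, Finset.card_univ, Fintype.card_fin, nsmul_eq_mul]

end Markov

end FFRD

open FFRD in
/-- Appendix E: for the stationary asymmetric binary Markov source with
per-letter Hamming distortion and `0 ≤ D < 1/2`, `D ≤ min{p, 1−p, q, 1−q}`, the `n`-th order
rate distortion function with feed-forward is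
`Rₙ(D) = (1/n)·H_b(π₁) + ((n−1)/n)(π₀ H_b(p) + π₁ H_b(q)) − H_b(D)`. -/
theorem markov_feed_forward_rate_distortion
    (p q : ℝ) (hp0 : 0 < p) (hp1 : p < 1) (hq0 : 0 < q) (hq1 : q < 1)
    (n : ℕ) (hn : 1 ≤ n)
    (D : ℝ) (hD0 : 0 ≤ D) (hDhalf : D < 1 / 2)
    (hDmin : D ≤ min (min p (1 - p)) (min q (1 - q))) :
    Rn n (markovPMF p q) (hamming n) D =
      (1 / (n : ℝ)) * Hb (p / (p + q)) +
      (((n : ℝ) - 1) / (n : ℝ)) * ((q / (p + q)) * Hb p + (p / (p + q)) * Hb q) -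
      Hb D := by
  obtain ⟨m, rfl⟩ : ∃ m, n = m + 1 := Nat.exists_eq_add_of_le' hn
  obtain ⟨⟨hDp, hDp'⟩, hDq, hDq'⟩ : (D ≤ p ∧ D ≤ 1 - p) ∧ D ≤ q ∧ D ≤ 1 - q := by
    simpa only [le_min_iff] using hDmin
  have hpq : p + q ≠ 0 := (add_pos hp0 hq0).ne'
  have markovProb_bounds (i : Fin (m + 1)) (x : Fin (m + 1) → Bool) :
      markovProb p q i x ∈ Set.Icc D (1 - D) :=
    markovProb_mem (convex_Icc D (1 - D)) hp0.le hq0.le hpq ⟨hDp, by linarith⟩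
      ⟨hDq', by linarith⟩ i x
  rw [markovPMF_eq_causalSource hpq,
    Rn_causalSource_hamming m.succ_ne_zero ⟨hD0, hDhalf⟩ (dependsOn_markovProb p q)
      markovProb_bounds, entropy_markov hpq]
  push_cast
  ring
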